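/- Let g ≥ 1, n ≥ 3, and let A = (α₁,…,αₙ) be a unit fraction partition of g with α₁ ≤ ⋯ ≤ αₙ. Then α₁·α₂⋯αₙ ≤ t_{g,n}²/g, and equality holds if and only if A = (s_{g,1}, …, s_{g,n−1}, t_{g,n}). -/

import Mathlib

open Finset

/-- The `g`-Sylvester sequence: `s_{g,1} = g+1`, `s_{g,k+1} = s_{g,k}(s_{g,k}-1)+1`.
(The value at `0` is junk and never used.) -/
def sylv (g : ℕ) : ℕ → ℕ
  | 0 => 0
  | 1 => g + 1
  | k + 2 => sylv g (k + 1) * (sylv g (k + 1) - 1) + 1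

/-- The truncated `g`-Sylvester sequence `t_{g,k} = s_{g,k} - 1`. -/
def tsylv (g k : ℕ) : ℕ := sylv g k - 1

/-- `A` is a unit fraction partition of `g`: a tuple of positive integers with
`1/g = ∑ 1/αᵢ`. -/
def IsUFP {n : ℕ} (g : ℕ) (A : Fin n → ℕ) : Prop :=
  (∀ i, 0 < A i) ∧ (1 : ℚ) / (g : ℚ) = ∑ i, (1 : ℚ) / (A i : ℚ)

/-!
Passing to reciprocals `yᵢ = 1 / αᵢ`, a unit fraction partition of `g` satisfies
`(1 / g) * ∏_{i < k} yᵢ ≤ ∑_{i ≥ k} yᵢ` for every `k < n`: the right-hand side is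
`1 / g - ∑_{i < k} yᵢ`, a positive fraction with denominator `g * ∏_{i < k} αᵢ`.  For the Sylvester
partition `w` these are all equalities.

Suppose `∏ yᵢ ≤ ∏ wᵢ`.  If the product of the first `k` entries of `y` is at least that of `w`,
while all longer partial products of `y` are at most those of `w`, then on the indices `i ≥ k` the
sequence `y` is dominated by `w` in partial products, yet its sum is at least that of `w`.  By
summation by parts and `log x ≤ x - 1`, this forces `y = w` there, as `y` is nonincreasing.  At the
largest `k` for which the partial product of `y` exceeded that of `w`, this would be contradictory,
so there is no such `k`; taking `k = 0` then gives `y = w` everywhere.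
-/

section PartialProducts

lemma mul_sum_range_le_sum_range_mul {R : Type*} [CommRing R] [LinearOrder R]
    [IsStrictOrderedRing R] {f d : ℕ → R} (hf : Antitone f) {n : ℕ}
    (hd : ∀ k ≤ n, 0 ≤ ∑ i ∈ range k, d i) :
    f n * ∑ i ∈ range n, d i ≤ ∑ i ∈ range n, f i * d i := by
  induction n with
  | zero => simp
  | succ n ih =>
    calc f (n + 1) * ∑ i ∈ range (n + 1), d i
        ≤ f n * ∑ i ∈ range (n + 1), d i :=
          mul_le_mul_of_nonneg_right (hf n.le_succ) (hd _ le_rfl)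
      _ = f n * ∑ i ∈ range n, d i + f n * d n := by rw [sum_range_succ, mul_add]
      _ ≤ ∑ i ∈ range (n + 1), f i * d i := by
          rw [sum_range_succ _ n]
          gcongr
          exact ih fun k hk => hd k (by lia)

lemma mul_log_div_lt_sub {x y : ℝ} (hx : 0 < x) (hy : 0 < y) (hne : x ≠ y) :
    x * Real.log (y / x) < y - x := by
  have hlog : Real.log (y / x) < y / x - 1 :=
    Real.log_lt_sub_one_of_pos (div_pos hy hx) fun h => hne ((div_eq_one_iff_eq hx.ne').1 h).symm
  calc x * Real.log (y / x) < x * (y / x - 1) := mul_lt_mul_of_pos_left hlog hx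
    _ = y - x := by field_simp

lemma mul_log_div_le_sub {x y : ℝ} (hx : 0 < x) (hy : 0 < y) :
    x * Real.log (y / x) ≤ y - x := by
  rcases eq_or_ne x y with rfl | hne
  · simp
  · exact (mul_log_div_lt_sub hx hy hne).le

variable {y w : ℕ → ℝ} {n : ℕ}

lemma eq_of_prod_range_le_of_sum_range_le (hy : ∀ i, 0 < y i) (hw : ∀ i, 0 < w i)
    (hanti : Antitone y) (hprod : ∀ k ≤ n, ∏ i ∈ range k, y i ≤ ∏ i ∈ range k, w i)
    (hsum : ∑ i ∈ range n, w i ≤ ∑ i ∈ range n, y i) {i : ℕ} (hi : i < n) : y i = w i := by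
  have hlog : ∀ k ≤ n, 0 ≤ ∑ i ∈ range k, Real.log (w i / y i) := by
    intro k hk
    rw [← Real.log_prod fun i _ => (div_pos (hw i) (hy i)).ne', prod_div_distrib]
    exact Real.log_nonneg ((one_le_div (prod_pos fun i _ => hy i)).2 (hprod k hk))
  have habel : 0 ≤ ∑ i ∈ range n, y i * Real.log (w i / y i) :=
    (mul_nonneg (hy n).le (hlog n le_rfl)).trans (mul_sum_range_le_sum_range_mul hanti hlog)
  by_contra hne
  have hlt : ∑ i ∈ range n, y i * Real.log (w i / y i) < ∑ i ∈ range n, (w i - y i) :=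
    sum_lt_sum (fun j _ => mul_log_div_le_sub (hy j) (hw j))
      ⟨i, mem_range.2 hi, mul_log_div_lt_sub (hy i) (hw i) hne⟩
  rw [sum_sub_distrib] at hlt
  linarith

lemma eq_of_prod_range_le_of_sum_Ico_le {k : ℕ} (hy : ∀ i, 0 < y i) (hw : ∀ i, 0 < w i)
    (hanti : Antitone y) (hk : ∏ i ∈ range k, w i ≤ ∏ i ∈ range k, y i)
    (hprod : ∀ l, k < l → l ≤ n → ∏ i ∈ range l, y i ≤ ∏ i ∈ range l, w i)
    (hsum : ∑ i ∈ Ico k n, w i ≤ ∑ i ∈ Ico k n, y i) {i : ℕ} (hki : k ≤ i) (hi : i < n) :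
    y i = w i := by
  have hshift : ∀ l ≤ n - k, ∏ i ∈ range l, y (k + i) ≤ ∏ i ∈ range l, w (k + i) := by
    intro l hl
    rcases l.eq_zero_or_pos with rfl | hl0
    · simp
    have hkl := hprod (k + l) (by lia) (by lia)
    rw [prod_range_add, prod_range_add] at hkl
    refine le_of_mul_le_mul_left ?_ (prod_pos fun i (_ : i ∈ range k) => hw i)
    exact (mul_le_mul_of_nonneg_right hk (prod_nonneg fun i _ => (hy _).le)).trans hkl
  obtain ⟨j, rfl⟩ := Nat.exists_eq_add_of_le hki
  rw [sum_Ico_eq_sum_range, sum_Ico_eq_sum_range] at hsum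
  exact eq_of_prod_range_le_of_sum_range_le (y := fun i => y (k + i)) (w := fun i => w (k + i))
    (fun _ => hy _) (fun _ => hw _) (fun _ _ h => hanti (by lia)) hshift hsum
    (i := j) (by lia)

theorem eq_of_mul_prod_le_sum_Ico {c : ℝ} (hc : 0 ≤ c) (hy : ∀ i, 0 < y i) (hw : ∀ i, 0 < w i)
    (hanti : Antitone y)
    (hytail : ∀ k < n, c * ∏ i ∈ range k, y i ≤ ∑ i ∈ Ico k n, y i)
    (hwtail : ∀ k < n, ∑ i ∈ Ico k n, w i ≤ c * ∏ i ∈ range k, w i)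
    (hprod : ∏ i ∈ range n, y i ≤ ∏ i ∈ range n, w i) {i : ℕ} (hi : i < n) : y i = w i := by
  have htail : ∀ k < n, ∏ i ∈ range k, w i ≤ ∏ i ∈ range k, y i →
      (∀ l, k < l → l ≤ n → ∏ i ∈ range l, y i ≤ ∏ i ∈ range l, w i) →
      ∀ i, k ≤ i → i < n → y i = w i := fun k hkn hk hl _ =>
    eq_of_prod_range_le_of_sum_Ico_le hy hw hanti hk hl <|
      (hwtail k hkn).trans <| (mul_le_mul_of_nonneg_left hk hc).trans (hytail k hkn)
  have hpartial : ∀ k ≤ n, ∀ l, k ≤ l → l ≤ n →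
      ∏ i ∈ range l, y i ≤ ∏ i ∈ range l, w i := by
    intro k hk
    induction hk using Nat.decreasingInduction with
    | self => intro l hnl hln; rwa [hln.antisymm hnl]
    | of_succ k hk ih =>
      intro l hkl hln
      rcases hkl.eq_or_lt with rfl | hlt
      · by_contra! hgt
        have heq : y k = w k := htail k hk hgt.le ih k le_rfl hk
        have hsucc := ih (k + 1) le_rfl hk
        rw [prod_range_succ, prod_range_succ, heq] at hsucc
        exact hgt.not_ge (le_of_mul_le_mul_right hsucc (hw k))
      · exact ih l hlt hln
  exact htail 0 (by lia) (by simp) (fun l _ => hpartial 0 (Nat.zero_le n) l (Nat.zero_le l))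
    i (Nat.zero_le i) hi

end PartialProducts

section Integrality

variable {ι K : Type*} {s : Finset ι} {a : ι → ℕ}

lemma sum_inv_natCast_eq_div [DecidableEq ι] [Field K] [CharZero K] (ha : ∀ i ∈ s, a i ≠ 0) :
    ∑ i ∈ s, (a i : K)⁻¹ = (∑ i ∈ s, ∏ j ∈ s.erase i, a j : ℕ) / (∏ i ∈ s, a i : ℕ) := by
  rw [Nat.cast_sum, sum_div]
  refine sum_congr rfl fun i hi => ?_
  have herase : (∏ j ∈ s.erase i, a j : ℕ) ≠ 0 :=
    prod_ne_zero_iff.2 fun j hj => ha j (mem_of_mem_erase hj)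
  rw [← mul_prod_erase s a hi, Nat.cast_mul, div_mul_cancel_right₀ (Nat.cast_ne_zero.2 herase)]

lemma inv_mul_prod_inv_le_sub_sum_inv [Field K] [LinearOrder K] [IsStrictOrderedRing K] {g : ℕ}
    (hg : 0 < g) (ha : ∀ i ∈ s, 0 < a i) (hlt : ∑ i ∈ s, (a i : K)⁻¹ < (g : K)⁻¹) :
    (g : K)⁻¹ * ∏ i ∈ s, (a i : K)⁻¹ ≤ (g : K)⁻¹ - ∑ i ∈ s, (a i : K)⁻¹ := by
  classical
  have hP : 0 < ∏ i ∈ s, a i := prod_pos ha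
  rw [prod_inv_distrib, ← Nat.cast_prod]
  rw [sum_inv_natCast_eq_div fun i hi => (ha i hi).ne'] at hlt ⊢
  generalize ∏ i ∈ s, a i = P at *
  generalize ∑ i ∈ s, ∏ j ∈ s.erase i, a j = S at *
  have hg' : (0 : K) < g := Nat.cast_pos.2 hg
  have hP' : (0 : K) < P := Nat.cast_pos.2 hP
  have hSP : g * S + 1 ≤ P := by
    rw [inv_eq_one_div, div_lt_div_iff₀ hP' hg', one_mul, mul_comm] at hlt
    exact_mod_cast hlt
  calc (g : K)⁻¹ * (P : K)⁻¹ = ((g * S + 1 : ℕ) - g * S) / (g * P) := by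
        push_cast
        field_simp
        ring
    _ ≤ (P - g * S) / (g * P) := by gcongr
    _ = (g : K)⁻¹ - S / P := by field_simp

lemma inv_mul_prod_range_inv_le_sum_Ico_inv [Field K] [LinearOrder K] [IsStrictOrderedRing K]
    {g n k : ℕ} {a : ℕ → ℕ} (hg : 0 < g) (ha : ∀ i < n, 0 < a i)
    (hsum : ∑ i ∈ range n, (a i : K)⁻¹ = (g : K)⁻¹) (hk : k < n) :
    (g : K)⁻¹ * ∏ i ∈ range k, (a i : K)⁻¹ ≤ ∑ i ∈ Ico k n, (a i : K)⁻¹ := by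
  have hsplit := sum_range_add_sum_Ico (fun i => (a i : K)⁻¹) hk.le
  have hpos : 0 < ∑ i ∈ Ico k n, (a i : K)⁻¹ :=
    sum_pos (fun i hi => inv_pos.2 (Nat.cast_pos.2 (ha i (mem_Ico.1 hi).2))) (nonempty_Ico.2 hk)
  have hle := inv_mul_prod_inv_le_sub_sum_inv (K := K) hg
    (fun i hi => ha i ((mem_range.1 hi).trans hk)) (by linarith : ∑ i ∈ range k, (a i : K)⁻¹ < _)
  linarith

end Integrality

section Sylvester

variable {g n : ℕ}

lemma sylv_succ (g k : ℕ) : sylv g (k + 1) = tsylv g (k + 1) + 1 := by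
  cases k <;> simp [tsylv, sylv]

lemma tsylv_one (g : ℕ) : tsylv g 1 = g := by simp [tsylv, sylv]

lemma tsylv_succ_succ (g k : ℕ) : tsylv g (k + 2) = tsylv g (k + 1) * sylv g (k + 1) := by
  simp [tsylv, sylv, mul_comm]

lemma tsylv_succ_pos (hg : 0 < g) (k : ℕ) : 0 < tsylv g (k + 1) := by
  induction k with
  | zero => rwa [tsylv_one]
  | succ k ih =>
    rw [tsylv_succ_succ, sylv_succ]
    positivity

lemma mul_prod_sylv (g k : ℕ) : g * ∏ i ∈ range k, sylv g (i + 1) = tsylv g (k + 1) := by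
  induction k with
  | zero => simp [tsylv_one]
  | succ k ih => rw [prod_range_succ, ← mul_assoc, ih, tsylv_succ_succ]

/-- The extremal partition `(s_{g,1}, …, s_{g,n-1}, t_{g,n})`, with entries numbered from `0` and
continued by the constant `t_{g,n}` beyond the `n`-th one so that it is positive on all of `ℕ`. -/
def sylvesterUFP (g n i : ℕ) : ℕ := if i + 1 < n then sylv g (i + 1) else tsylv g n

lemma sylvesterUFP_pos (hg : 0 < g) (hn : 0 < n) (i : ℕ) : 0 < sylvesterUFP g n i := by
  obtain ⟨m, rfl⟩ := Nat.exists_eq_add_one.2 hn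
  unfold sylvesterUFP
  split_ifs
  · rw [sylv_succ]
    exact Nat.succ_pos _
  · exact tsylv_succ_pos hg m

lemma mul_prod_range_sylvesterUFP {k : ℕ} (hk : k < n) :
    g * ∏ i ∈ range k, sylvesterUFP g n i = tsylv g (k + 1) := by
  rw [← mul_prod_sylv]
  congr 1
  refine prod_congr rfl fun i hi => if_pos ?_
  have hik := mem_range.1 hi
  lia

lemma mul_prod_sylvesterUFP (hn : 0 < n) :
    g * ∏ i ∈ range n, sylvesterUFP g n i = tsylv g n ^ 2 := by
  obtain ⟨m, rfl⟩ := Nat.exists_eq_add_one.2 hn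
  rw [prod_range_succ, ← mul_assoc, mul_prod_range_sylvesterUFP m.lt_succ_self, sylvesterUFP,
    if_neg (lt_irrefl _), sq]

lemma sum_Ico_inv_sylvesterUFP {K : Type*} [Field K] [CharZero K] (hg : 0 < g) {k : ℕ}
    (hk : k < n) : ∑ i ∈ Ico k n, (sylvesterUFP g n i : K)⁻¹ = (tsylv g (k + 1) : K)⁻¹ := by
  obtain ⟨m, rfl⟩ : ∃ m, n = m + 1 := Nat.exists_eq_add_one.2 (by lia)
  induction Nat.le_of_lt_succ hk using Nat.decreasingInduction with
  | self => simp [sylvesterUFP]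
  | of_succ k hkm ih =>
    have ht : (tsylv g (k + 1) : K) ≠ 0 := Nat.cast_ne_zero.2 (tsylv_succ_pos hg k).ne'
    have hs : (tsylv g (k + 1) + 1 : K) ≠ 0 := by exact_mod_cast (tsylv g (k + 1)).succ_ne_zero
    rw [sum_eq_sum_Ico_succ_bot hk, ih (by lia), sylvesterUFP, if_pos (by lia), tsylv_succ_succ,
      sylv_succ]
    push_cast
    field_simp

theorem eq_sylvesterUFP_of_sq_le_mul_prod_range {a : ℕ → ℕ} (hg : 0 < g) (ha : ∀ i, 0 < a i)
    (hmono : Monotone a) (hsum : ∑ i ∈ range n, (a i : ℝ)⁻¹ = (g : ℝ)⁻¹)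
    (hprod : tsylv g n ^ 2 ≤ g * ∏ i ∈ range n, a i) {i : ℕ} (hi : i < n) :
    a i = sylvesterUFP g n i := by
  have hn : 0 < n := by lia
  have hb := sylvesterUFP_pos hg hn
  have hwtail : ∀ k < n, ∑ i ∈ Ico k n, (sylvesterUFP g n i : ℝ)⁻¹ ≤
      (g : ℝ)⁻¹ * ∏ i ∈ range k, (sylvesterUFP g n i : ℝ)⁻¹ := by
    intro k hk
    rw [sum_Ico_inv_sylvesterUFP hg hk, ← mul_prod_range_sylvesterUFP hk, prod_inv_distrib,
      ← mul_inv]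
    push_cast
    rfl
  have hprod_inv : ∏ i ∈ range n, (a i : ℝ)⁻¹ ≤ ∏ i ∈ range n, (sylvesterUFP g n i : ℝ)⁻¹ := by
    rw [← mul_prod_sylvesterUFP hn, mul_le_mul_iff_right₀ hg] at hprod
    rw [prod_inv_distrib, prod_inv_distrib]
    refine inv_anti₀ (prod_pos fun i _ => Nat.cast_pos.2 (hb i)) ?_
    exact_mod_cast hprod
  have hinv := eq_of_mul_prod_le_sum_Ico (y := fun i => (a i : ℝ)⁻¹)
    (w := fun i => (sylvesterUFP g n i : ℝ)⁻¹) (by positivity)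
    (fun i => inv_pos.2 (Nat.cast_pos.2 (ha i))) (fun i => inv_pos.2 (Nat.cast_pos.2 (hb i)))
    (fun i j hij => inv_anti₀ (Nat.cast_pos.2 (ha i)) (Nat.cast_le.2 (hmono hij)))
    (fun k => inv_mul_prod_range_inv_le_sum_Ico_inv hg (fun i _ => ha i) hsum)
    hwtail hprod_inv hi
  exact_mod_cast inv_injective hinv

end Sylvester

namespace IsUFP

variable {g n : ℕ} {A : Fin n → ℕ}

lemma length_pos (hA : IsUFP g A) (hg : 0 < g) : 0 < n := by
  rcases n.eq_zero_or_pos with rfl | hn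
  · have h := hA.2
    rw [univ_eq_empty, sum_empty, one_div, inv_eq_zero, Nat.cast_eq_zero] at h
    exact absurd h hg.ne'
  · exact hn

theorem eq_sylvesterUFP_of_sq_le_mul_prod (hA : IsUFP g A) (hg : 0 < g) (hmono : Monotone A)
    (hprod : tsylv g n ^ 2 ≤ g * ∏ i, A i) (i : Fin n) : A i = sylvesterUFP g n i := by
  have hn : 0 < n := i.pos
  let a : ℕ → ℕ := fun i => A ⟨min i (n - 1), by lia⟩
  have haA (i : Fin n) : a i = A i := congrArg A (Fin.ext (by grind))
  have hsum : ∑ i ∈ range n, (a i : ℝ)⁻¹ = (g : ℝ)⁻¹ := by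
    have h := congrArg (Rat.cast : ℚ → ℝ) hA.2
    push_cast at h
    simpa only [sum_range, haA, one_div] using h.symm
  rw [← haA]
  refine eq_sylvesterUFP_of_sq_le_mul_prod_range (a := a) hg (fun _ => hA.1 _)
    (fun i j hij => hmono (Fin.mk_le_mk.2 (min_le_min_right _ hij))) hsum ?_ i.isLt
  simpa only [prod_range, haA] using hprod

end IsUFP

theorem ufp_product_bound_general
    (g n : ℕ) (hg : 1 ≤ g) (A : Fin n → ℕ) (hA : IsUFP g A) (hmono : Monotone A) :
    ((∏ i, A i : ℕ) : ℚ) ≤ (tsylv g n : ℚ) ^ 2 / (g : ℚ) ∧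
      (((∏ i, A i : ℕ) : ℚ) = (tsylv g n : ℚ) ^ 2 / (g : ℚ) ↔
        ∀ i : Fin n, A i = if i.val + 1 < n then sylv g (i.val + 1) else tsylv g n) := by
  have hg' : (0 : ℚ) < g := Nat.cast_pos.2 hg
  have hforce : tsylv g n ^ 2 ≤ g * ∏ i, A i → ∀ i, A i = sylvesterUFP g n i :=
    hA.eq_sylvesterUFP_of_sq_le_mul_prod hg hmono
  have hextremal (h : ∀ i, A i = sylvesterUFP g n i) : g * ∏ i, A i = tsylv g n ^ 2 := by
    rw [← mul_prod_sylvesterUFP (hA.length_pos hg), prod_range]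
    simp only [h]
  rw [le_div_iff₀' hg', eq_div_iff hg'.ne', mul_comm _ (g : ℚ)]
  norm_cast
  refine ⟨?_, fun h => hforce h.ge, hextremal⟩
  exact (le_total _ _).elim id fun h => (hextremal (hforce h)).le

/-- For a unit fraction partition `A = (α₁,…,αₙ)` of `g` with
`g ≥ 1`, `n ≥ 3` and `α₁ ≤ ⋯ ≤ αₙ`, one has `α₁⋯αₙ ≤ t_{g,n}²/g`, with equality
iff `A = (s_{g,1},…,s_{g,n-1},t_{g,n})`. -/
theorem ufp_product_bound
    (g n : ℕ) (hg : 1 ≤ g) (hn : 3 ≤ n)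
    (A : Fin n → ℕ) (hA : IsUFP g A) (hmono : Monotone A) :
    ((∏ i, A i : ℕ) : ℚ) ≤ (tsylv g n : ℚ) ^ 2 / (g : ℚ) ∧
      (((∏ i, A i : ℕ) : ℚ) = (tsylv g n : ℚ) ^ 2 / (g : ℚ) ↔
        ∀ i : Fin n, A i = if i.val + 1 < n then sylv g (i.val + 1) else tsylv g n) :=
  ufp_product_bound_general g n hg A hA hmono
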